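/- Let R be a relative hemisystem of Q⁻(2n+1,2) with respect to 𝒬, where n ≥ 3, and let 𝒢 be the graph whose vertex set is R, two distinct points ⟨x⟩, ⟨y⟩ ∈ R being adjacent if and only if the 2-dimensional subspace spanned by x and y is totally singular. Then 𝒢 is a strongly regular graph with parameters v = 2^{n−1}(2ⁿ − 1), k = (2^{n−2} − 1)(2ⁿ + 1), λ = 2(2^{n−1} + 1)(2^{n−3} − 1), and μ = 2^{n−1}(2^{n−2} − 1). -/

import Mathlib

noncomputable section

open Module

variable {F V : Type*} [Field F] [AddCommGroup V] [Module F V]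

/-- `P` is a singular point of the quadratic form `Q`, i.e. a `1`-dimensional subspace
spanned by a nonzero singular vector. -/
def IsSingularPoint (Q : QuadraticForm F V) (P : Submodule F V) : Prop :=
  ∃ v : V, v ≠ 0 ∧ Q v = 0 ∧ P = Submodule.span F {v}

/-- A subspace is totally singular if `Q` vanishes identically on it. -/
def TotallySingular (Q : QuadraticForm F V) (W : Submodule F V) : Prop :=
  ∀ v ∈ W, Q v = 0

/-- A generator is a totally singular subspace of (vector space) dimension `n`. -/
def IsGenerator (Q : QuadraticForm F V) (n : ℕ) (g : Submodule F V) : Prop :=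
  TotallySingular Q g ∧ finrank F g = n

/-- The restriction of `Q` to the subspace `U` is nondegenerate. -/
def NondegOn (Q : QuadraticForm F V) (U : Submodule F V) : Prop :=
  ∀ v ∈ U, Q v = 0 → (∀ w ∈ U, QuadraticMap.polar (⇑Q) v w = 0) → v = 0

/-- The quadratic form `Q` is nondegenerate. -/
def Nondeg (Q : QuadraticForm F V) : Prop :=
  ∀ v : V, Q v = 0 → (∀ w : V, QuadraticMap.polar (⇑Q) v w = 0) → v = 0

/-- `Q` has Witt index `n`: every totally singular subspace has dimension at most `n`
and some totally singular subspace has dimension `n`. -/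
def HasWittIndex (Q : QuadraticForm F V) (n : ℕ) : Prop :=
  (∀ W : Submodule F V, TotallySingular Q W → finrank F W ≤ n) ∧
  ∃ W : Submodule F V, TotallySingular Q W ∧ finrank F W = n

/-- A relative `m`-ovoid with respect to the parabolic section cut out by the
hyperplane `H`: a set `R` of singular points not contained in `H` such that every
generator not contained in `H` contains exactly `m` points of `R`. -/
def IsRelativeMOvoid (Q : QuadraticForm F V) (n : ℕ) (H : Submodule F V) (m : ℕ)
    (R : Set (Submodule F V)) : Prop :=
  (∀ P ∈ R, IsSingularPoint Q P ∧ ¬ P ≤ H) ∧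
  ∀ g : Submodule F V, IsGenerator Q n g → ¬ g ≤ H → {P ∈ R | P ≤ g}.ncard = m

/-- Two distinct singular points of `R` are adjacent when the `2`-dimensional subspace
they span (their sup) is totally singular, i.e. when they span a line of the quadric. -/
def AdjOn (Q : QuadraticForm F V) (P P' : Submodule F V) : Prop :=
  P ≠ P' ∧ TotallySingular Q (P ⊔ P')

open scoped Classical in
/-- additive character sign -/
def chi (a : F) : ℤ := if a = 0 then 1 else -1

lemma f2_cases [Fintype F] (hF : Fintype.card F = 2) (a : F) : a = 0 ∨ a = 1 := by
  classical
  by_contra h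
  push Not at h
  have : ({0, 1, a} : Finset F).card ≤ Fintype.card F := Finset.card_le_univ _
  rw [Finset.card_eq_three.2 ⟨0, 1, a, zero_ne_one, h.1.symm, h.2.symm, rfl⟩] at this
  omega

lemma f2_add_self [Fintype F] (hF : Fintype.card F = 2) (a : F) : a + a = 0 := by
  have h2 : (1 : F) + 1 = 0 := by
    rcases f2_cases hF (1 + 1 : F) with h | h
    · exact h
    · simp at h
  rw [← mul_one a, ← mul_add, h2, mul_zero]

lemma v2_add_self [Fintype F] (hF : Fintype.card F = 2) (v : V) : v + v = 0 := by
  rw [← one_smul F v, ← add_smul, f2_add_self hF, zero_smul]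

lemma chi_zero : chi (0 : F) = 1 := by simp [chi]

lemma chi_ne {a : F} (h : a ≠ 0) : chi a = -1 := by simp [chi, h]

lemma chi_add [Fintype F] (hF : Fintype.card F = 2) (a b : F) :
    chi (a + b) = chi a * chi b := by
  have h2 := f2_add_self hF (1 : F)
  rcases f2_cases hF a with rfl | rfl <;> rcases f2_cases hF b with rfl | rfl <;>
    simp [chi, h2]

lemma Q_add (Q : QuadraticForm F V) (v w : V) :
    Q (v + w) = Q v + Q w + QuadraticMap.polar Q v w := by
  simp [QuadraticMap.polar]

lemma polar_self2 [Fintype F] (hF : Fintype.card F = 2) (Q : QuadraticForm F V) (v : V) :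
    QuadraticMap.polar Q v v = 0 := by
  have := Q_add Q v v
  rw [v2_add_self hF, f2_add_self hF] at this
  simpa using this.symm

lemma sub_charsum [Fintype F] (hF : Fintype.card F = 2) [Fintype V]
    (Q : QuadraticForm F V) (W : Submodule F V) [Fintype W] (w : V)
    [Decidable (∀ u ∈ W, QuadraticMap.polar Q u w = 0)] :
    ∑ u : W, chi (QuadraticMap.polar Q (u : V) w)
      = if (∀ u ∈ W, QuadraticMap.polar Q u w = 0) then (Fintype.card W : ℤ) else 0 := by
  split_ifs with h
  · rw [Finset.sum_congr rfl (fun u _ => by rw [h u u.2, chi_zero])]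
    simp
  · push Not at h
    obtain ⟨u0, hu0, hne⟩ := h
    have := Equiv.sum_comp (Equiv.addRight (⟨u0, hu0⟩ : W))
      (fun u : W => chi (QuadraticMap.polar Q (u : V) w))
    simp only [Equiv.coe_addRight, Submodule.coe_add, QuadraticMap.polar_add_left,
      chi_add hF, chi_ne hne] at this
    rw [← Finset.sum_mul] at this
    linarith

lemma all_charsum [Fintype F] (hF : Fintype.card F = 2) [Fintype V]
    (Q : QuadraticForm F V) (u : V)
    [Decidable (∀ w, QuadraticMap.polar Q u w = 0)] :
    ∑ w : V, chi (QuadraticMap.polar Q u w)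
      = if (∀ w, QuadraticMap.polar Q u w = 0) then (Fintype.card V : ℤ) else 0 := by
  split_ifs with h
  · rw [Finset.sum_congr rfl (fun w _ => by rw [h w, chi_zero])]
    simp
  · push Not at h
    obtain ⟨u0, hne⟩ := h
    have := Equiv.sum_comp (Equiv.addRight u0)
      (fun w : V => chi (QuadraticMap.polar Q u w))
    simp only [Equiv.coe_addRight, QuadraticMap.polar_add_right,
      chi_add hF, chi_ne hne] at this
    rw [← Finset.sum_mul] at this
    linarith

open scoped Classical in
/-- perp as a finset -/
def perpF [Fintype V] (Q : QuadraticForm F V) (W : Submodule F V) : Finset V :=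
  Finset.univ.filter (fun w => ∀ u ∈ W, QuadraticMap.polar Q u w = 0)

lemma mem_perpF [Fintype V] (Q : QuadraticForm F V) (W : Submodule F V) (w : V) :
    w ∈ perpF Q W ↔ ∀ u ∈ W, QuadraticMap.polar Q u w = 0 := by
  simp [perpF]

open scoped Classical in
lemma perp_card [Fintype F] (hF : Fintype.card F = 2) [Fintype V]
    (Q : QuadraticForm F V) (W : Submodule F V) [Fintype W]
    (hW : ∀ u ∈ W, (∀ w, QuadraticMap.polar Q u w = 0) → u = 0) :
    ((perpF Q W).card : ℤ) * Fintype.card W = Fintype.card V := by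
  have h1 : ∑ w : V, ∑ u : W, chi (QuadraticMap.polar Q (u : V) w)
      = ((perpF Q W).card : ℤ) * Fintype.card W := by
    simp_rw [sub_charsum hF Q W]
    rw [← Finset.sum_filter, Finset.sum_const, nsmul_eq_mul]
    rfl
  rw [← h1, Finset.sum_comm]
  simp_rw [all_charsum hF Q]
  rw [Finset.sum_eq_single (0 : W)]
  · simp
  · intro b _ hb
    rw [if_neg]
    intro h
    exact hb (Subtype.ext (hW b b.2 h))
  · simp

lemma gauss_shift [Fintype F] (hF : Fintype.card F = 2) [Fintype V]
    (Q : QuadraticForm F V) (u : V) :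
    ∑ w : V, chi (Q w) * chi (QuadraticMap.polar Q u w) = chi (Q u) * ∑ w : V, chi (Q w) := by
  have := Equiv.sum_comp (Equiv.addLeft u) (fun w : V => chi (Q w))
  rw [← this, Finset.mul_sum]
  refine Finset.sum_congr rfl fun w _ => ?_
  simp only [Equiv.coe_addLeft]
  rw [Q_add, chi_add hF, chi_add hF]
  have : chi (Q u) * chi (Q u) = 1 := by rw [← chi_add hF, f2_add_self hF, chi_zero]
  linear_combination (-(chi (Q w) * chi (QuadraticMap.polar Q u w))) * this

open scoped Classical in
lemma perp_gauss [Fintype F] (hF : Fintype.card F = 2) [Fintype V]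
    (Q : QuadraticForm F V) (W : Submodule F V) (hW : TotallySingular Q W) :
    ∑ w ∈ perpF Q W, chi (Q w) = ∑ w : V, chi (Q w) := by
  have h1 : ∑ w : V, ∑ u : W, chi (Q w) * chi (QuadraticMap.polar Q (u : V) w)
      = (∑ w ∈ perpF Q W, chi (Q w)) * Fintype.card W := by
    simp_rw [← Finset.mul_sum, sub_charsum hF Q W]
    simp only [mul_ite, mul_zero]
    rw [← Finset.sum_filter, Finset.sum_mul]
    rfl
  rw [Finset.sum_comm] at h1
  simp_rw [gauss_shift hF Q] at h1
  rw [Finset.sum_congr rfl (fun u _ => by rw [hW u.1 u.2, chi_zero, one_mul])] at h1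
  rw [Finset.sum_const, nsmul_eq_mul, mul_comm, Finset.card_univ] at h1
  have : (Fintype.card W : ℤ) ≠ 0 := by exact_mod_cast Fintype.card_ne_zero
  exact (mul_right_cancel₀ this h1).symm

lemma chi_sum_count [Fintype V] (Q : QuadraticForm F V) (s : Finset V)
    [DecidablePred fun w => Q w = 0] :
    ∑ w ∈ s, chi (Q w) = 2 * ((s.filter (fun w => Q w = 0)).card : ℤ) - s.card := by
  rw [Finset.card_eq_sum_ones s, Finset.card_filter]
  push_cast
  rw [Finset.mul_sum, ← Finset.sum_sub_distrib]
  refine Finset.sum_congr rfl fun w _ => ?_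
  by_cases h : Q w = 0 <;> simp [chi, h]

lemma ts_sup [Fintype F] (hF : Fintype.card F = 2)
    (W : Submodule F V) (v y : V) :
    y ∈ W ⊔ Submodule.span F {v} ↔ y ∈ W ∨ y + v ∈ W := by
  rw [Submodule.mem_sup]
  constructor
  · rintro ⟨w, hw, t, ht, rfl⟩
    obtain ⟨a, rfl⟩ := Submodule.mem_span_singleton.1 ht
    rcases f2_cases hF a with rfl | rfl
    · left; simpa using hw
    · right; rw [one_smul, add_assoc, v2_add_self hF, add_zero]; exact hw
  · rintro (h | h)
    · exact ⟨y, h, 0, Submodule.zero_mem _, add_zero _⟩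
    · exact ⟨y + v, h, v, Submodule.mem_span_singleton_self v, by
        rw [add_assoc, v2_add_self hF, add_zero]⟩

lemma ts_sup_ts [Fintype F] (hF : Fintype.card F = 2) (Q : QuadraticForm F V)
    (W : Submodule F V) (hW : TotallySingular Q W) (v : V) (hv : Q v = 0)
    (hp : ∀ u ∈ W, QuadraticMap.polar Q u v = 0) :
    TotallySingular Q (W ⊔ Submodule.span F {v}) := by
  intro y hy
  rcases (ts_sup hF W v y).1 hy with h | h
  · exact hW y h
  · have : y = (y + v) + v := by rw [add_assoc, v2_add_self hF, add_zero]
    rw [this, Q_add, hW _ h, hp _ h, hv]; simp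

lemma finrank_sup' [FiniteDimensional F V] 
    (W : Submodule F V) (v : V) (hv : v ∉ W) :
    finrank F (W ⊔ Submodule.span F {v} : Submodule F V) = finrank F W + 1 := by
  have hv0 : v ≠ 0 := by rintro rfl; exact hv W.zero_mem
  have h := Submodule.finrank_sup_add_finrank_inf_eq W (Submodule.span F {v})
  rw [finrank_span_singleton hv0] at h
  have : W ⊓ Submodule.span F {v} = ⊥ := by
    rw [← disjoint_iff]
    exact (Submodule.disjoint_span_singleton' hv0).2 hv
  rw [this, finrank_bot] at h
  omega

/-- singular vectors perpendicular to a generator lie in it -/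
lemma gen_perp [Fintype F] (hF : Fintype.card F = 2) [FiniteDimensional F V]
    (Q : QuadraticForm F V) (n : ℕ)
    (hmax : ∀ W : Submodule F V, TotallySingular Q W → finrank F W ≤ n)
    (W : Submodule F V) (hW : TotallySingular Q W) (hn : finrank F W = n) (v : V) (hv : Q v = 0)
    (hp : ∀ u ∈ W, QuadraticMap.polar Q u v = 0) : v ∈ W := by
  by_contra h
  have := hmax _ (ts_sup_ts hF Q W hW v hv hp)
  rw [finrank_sup' W v h] at this
  omega

lemma ts_polar (Q : QuadraticForm F V)
    (W : Submodule F V) (hW : TotallySingular Q W) (u v : V) (hu : u ∈ W) (hv : v ∈ W) :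
    QuadraticMap.polar Q u v = 0 := by
  simp [QuadraticMap.polar, hW u hu, hW v hv, hW _ (W.add_mem hu hv)]

open scoped Classical in
lemma perp_card_ts [Fintype F] (hF : Fintype.card F = 2) [Fintype V]
    (n : ℕ) (hV : finrank F V = 2 * n + 2)
    (Q : QuadraticForm F V) (hQnd : Nondeg Q)
    (W : Submodule F V) (hW : TotallySingular Q W) :
    ((perpF Q W).card : ℤ) * 2 ^ finrank F W = 2 ^ (2 * n + 2) := by
  have := perp_card hF Q W (fun u hu h => hQnd u (hW u hu) h)
  rw [Module.card_eq_pow_finrank (K := F) (V := W), Module.card_eq_pow_finrank (K := F) (V := V),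
    hF, hV] at this
  exact_mod_cast this

open scoped Classical in
lemma gauss_val [Fintype F] (hF : Fintype.card F = 2) [Fintype V]
    (n : ℕ) (hV : finrank F V = 2 * n + 2)
    (Q : QuadraticForm F V) (hQnd : Nondeg Q) (hQw : HasWittIndex Q n) :
    ∑ w : V, chi (Q w) = - 2 ^ (n + 1) := by
  obtain ⟨hmax, W, hW, hWn⟩ := hQw
  rw [← perp_gauss hF Q W hW, chi_sum_count]
  have h1 := perp_card_ts hF n hV Q hQnd W hW
  have h2 : ((perpF Q W).filter (fun w => Q w = 0)) = Finset.univ.filter (fun w => w ∈ W) := by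
    ext w
    simp only [Finset.mem_filter, mem_perpF, Finset.mem_univ, true_and]
    constructor
    · rintro ⟨h, h'⟩
      exact gen_perp hF Q n hmax W hW hWn w h' h
    · intro h
      exact ⟨fun u hu => ts_polar Q W hW u w hu h, hW w h⟩
  have h3 : (Finset.univ.filter (fun w => w ∈ W)).card = 2 ^ n := by
    rw [← Fintype.card_subtype, ← hWn, ← hF]
    exact Module.card_eq_pow_finrank (K := F) (V := W)
  rw [h2, h3]
  rw [hWn] at h1
  have h4 : ((perpF Q W).card : ℤ) = 2 ^ (n + 2) := by
    have : (2 : ℤ) ^ n ≠ 0 := by positivity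
    apply mul_right_cancel₀ this
    rw [h1]; ring
  rw [h4]; push_cast; ring

/-- number of singular vectors in the perp -/
lemma sing_perp_count [Fintype F] (hF : Fintype.card F = 2) [Fintype V]
    (n : ℕ) (hV : finrank F V = 2 * n + 2)
    (Q : QuadraticForm F V) (hQnd : Nondeg Q) (hQw : HasWittIndex Q n)
    [DecidablePred fun w => Q w = 0]
    (W : Submodule F V) (hW : TotallySingular Q W) (m : ℕ) (hm : finrank F W + m = n) :
    (((perpF Q W).filter (fun w => Q w = 0)).card : ℤ)
      = 2 ^ finrank F W * 2 ^ (2 * m + 1) - 2 ^ finrank F W * 2 ^ m := by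
  have h1 := perp_card_ts hF n hV Q hQnd W hW
  have h2 := chi_sum_count Q (perpF Q W)
  rw [perp_gauss hF Q W hW, gauss_val hF n hV Q hQnd hQw] at h2
  have h4 : ((perpF Q W).card : ℤ) = 2 ^ finrank F W * 2 ^ (2 * m + 2) := by
    have : (2 : ℤ) ^ finrank F W ≠ 0 := by positivity
    apply mul_right_cancel₀ this
    rw [h1, ← hm]; ring
  rw [h4, ← hm] at h2
  have : (2:ℤ) * (((perpF Q W).filter (fun w => Q w = 0)).card : ℤ)
      = 2 * (2 ^ finrank F W * 2 ^ (2 * m + 1) - 2 ^ finrank F W * 2 ^ m) := by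
    have e : (2:ℤ) ^ (finrank F W + m + 1) = 2 * (2 ^ finrank F W * 2 ^ m) := by ring
    rw [e] at h2
    have e : (2:ℤ) ^ (2 * m + 2) = 2 * 2 ^ (2 * m + 1) := by ring
    rw [e] at h2
    linarith
  linarith

lemma mem_card [Fintype F] (hF : Fintype.card F = 2) [Fintype V]
    (W : Submodule F V) [DecidablePred fun w => w ∈ W] :
    (Finset.univ.filter (fun w => w ∈ W)).card = 2 ^ finrank F W := by
  classical
  rw [← Fintype.card_subtype, ← hF]
  exact Module.card_eq_pow_finrank (K := F) (V := W)

lemma perp_sup [Fintype F] (hF : Fintype.card F = 2) [Fintype V]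
    (Q : QuadraticForm F V) (W : Submodule F V) (v y : V) :
    y ∈ perpF Q (W ⊔ Submodule.span F {v}) ↔ y ∈ perpF Q W ∧ QuadraticMap.polar Q v y = 0 := by
  rw [mem_perpF, mem_perpF]
  constructor
  · intro h
    exact ⟨fun u hu => h u (Submodule.mem_sup_left hu),
      h v (Submodule.mem_sup_right (Submodule.mem_span_singleton_self v))⟩
  · rintro ⟨h, h'⟩ u hu
    rcases (ts_sup hF W v u).1 hu with h1 | h1
    · exact h u h1
    · have := h _ h1
      rwa [QuadraticMap.polar_add_left, h', add_zero] at this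

open scoped Classical in
/-- singular vectors in the perp of W outside W -/
def sigF [Fintype V] (Q : QuadraticForm F V) (W : Submodule F V) : Finset V :=
  (perpF Q W).filter (fun w => Q w = 0 ∧ w ∉ W)

lemma mem_sigF [Fintype V] (Q : QuadraticForm F V) (W : Submodule F V) (w : V) :
    w ∈ sigF Q W ↔ w ∈ perpF Q W ∧ Q w = 0 ∧ w ∉ W := by
  simp [sigF]

lemma ts_le_perp [Fintype V] (Q : QuadraticForm F V) (W : Submodule F V)
    (hW : TotallySingular Q W) (w : V) (h : w ∈ W) : w ∈ perpF Q W := by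
  rw [mem_perpF]
  exact fun u hu => ts_polar Q W hW u w hu h

open scoped Classical in
lemma sig_card [Fintype F] (hF : Fintype.card F = 2) [Fintype V]
    (n : ℕ) (hV : finrank F V = 2 * n + 2)
    (Q : QuadraticForm F V) (hQnd : Nondeg Q) (hQw : HasWittIndex Q n)
    (W : Submodule F V) (hW : TotallySingular Q W) (m : ℕ) (hm : finrank F W + m = n) :
    ((sigF Q W).card : ℤ)
      = 2 ^ finrank F W * 2 ^ (2 * m + 1) - 2 ^ finrank F W * 2 ^ m - 2 ^ finrank F W := by
  have h1 := sing_perp_count hF n hV Q hQnd hQw W hW m hm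
  have h2 : sigF Q W = ((perpF Q W).filter (fun w => Q w = 0)) \
      Finset.univ.filter (fun w => w ∈ W) := by
    ext w
    simp [mem_sigF, and_assoc]
  have hsub : Finset.univ.filter (fun w => w ∈ W) ⊆ (perpF Q W).filter (fun w => Q w = 0) := by
    intro w
    simp only [Finset.mem_filter, Finset.mem_univ, true_and]
    exact fun h => ⟨ts_le_perp Q W hW w h, hW w h⟩
  rw [h2, Finset.cast_card_sdiff hsub, h1, mem_card hF]
  push_cast; ring

open scoped Classical in
lemma sig_card' [Fintype F] (hF : Fintype.card F = 2) [Fintype V]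
    (n : ℕ) (hV : finrank F V = 2 * n + 2)
    (Q : QuadraticForm F V) (hQnd : Nondeg Q) (hQw : HasWittIndex Q n)
    (W : Submodule F V) (hW : TotallySingular Q W) (m : ℕ) (hm : finrank F W + (m + 1) = n)
    (y : V) (hy : y ∈ sigF Q W) :
    (((sigF Q W).filter (fun v => QuadraticMap.polar Q v y = 0)).card : ℤ)
      = 2 ^ finrank F W * 2 ^ (2 * m + 2) - 2 ^ finrank F W * 2 ^ (m + 1) - 2 ^ finrank F W := by
  rw [mem_sigF] at hy
  obtain ⟨hy1, hy2, hy3⟩ := hy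
  have hp := (mem_perpF Q W y).1 hy1
  have hts := ts_sup_ts hF Q W hW y hy2 hp
  have hfr := finrank_sup' W y hy3
  have h1 := sing_perp_count hF n hV Q hQnd hQw _ hts m (by omega)
  have h2 : (sigF Q W).filter (fun v => QuadraticMap.polar Q v y = 0)
      = ((perpF Q (W ⊔ Submodule.span F {y})).filter (fun w => Q w = 0)) \
      Finset.univ.filter (fun w => w ∈ W) := by
    ext w
    simp only [Finset.mem_filter, mem_sigF, Finset.mem_sdiff, perp_sup hF, Finset.mem_univ,
      true_and, QuadraticMap.polar_comm (⇑Q) w y]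
    tauto
  have hsub : Finset.univ.filter (fun w => w ∈ W) ⊆
      (perpF Q (W ⊔ Submodule.span F {y})).filter (fun w => Q w = 0) := by
    intro w
    simp only [Finset.mem_filter, Finset.mem_univ, true_and]
    exact fun h => ⟨ts_le_perp Q _ hts w (Submodule.mem_sup_left h), hW w h⟩
  rw [h2, Finset.cast_card_sdiff hsub, h1, mem_card hF, hfr]
  push_cast; ring

open scoped Classical in
lemma coset_card [Fintype F] (hF : Fintype.card F = 2) [Fintype V]
    (Q : QuadraticForm F V) (W : Submodule F V) (hW : TotallySingular Q W)
    (y : V) (hy : y ∈ sigF Q W) :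
    ((sigF Q W).filter (fun v => y + v ∈ W)).card = 2 ^ finrank F W := by
  rw [← mem_card hF W]
  rw [mem_sigF] at hy
  obtain ⟨hy1, hy2, hy3⟩ := hy
  have hp := (mem_perpF Q W y).1 hy1
  have yy := v2_add_self hF y
  have hts := ts_sup_ts hF Q W hW y hy2 hp
  refine Finset.card_bij (fun v _ => y + v) ?_ ?_ ?_
  · simp
  · intro a _ b _ h; exact add_left_cancel h
  · intro w hw
    simp only [Finset.mem_filter, Finset.mem_univ, true_and] at hw
    have e : y + (y + w) = w := by rw [← add_assoc, yy, zero_add]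
    have hmem : y + w ∈ W ⊔ Submodule.span F {y} :=
      Submodule.add_mem _ (Submodule.mem_sup_right (Submodule.mem_span_singleton_self y))
        (Submodule.mem_sup_left hw)
    refine ⟨y + w, ?_, e⟩
    rw [Finset.mem_filter, mem_sigF, e]
    refine ⟨⟨?_, hts _ hmem, ?_⟩, hw⟩
    · exact ((perp_sup hF Q W y _).1 (ts_le_perp Q _ hts _ hmem)).1
    · intro h
      exact hy3 ((Submodule.add_mem_iff_left W hw).1 h)

open scoped Classical in
lemma eig [Fintype F] (hF : Fintype.card F = 2) [Fintype V]
    (n : ℕ) (hV : finrank F V = 2 * n + 2)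
    (Q : QuadraticForm F V) (hQnd : Nondeg Q) (hQw : HasWittIndex Q n)
    (f : V → ℤ) (hf : ∀ v, f v ≠ 0 → Q v = 0)
    (hg : ∀ g, IsGenerator Q n g → ∑ v with v ∈ g, f v = 0) (m : ℕ) :
    ∀ W : Submodule F V, TotallySingular Q W → finrank F W + m = n →
      ∑ v ∈ perpF Q W, f v = - 2 ^ (m + 1) * ∑ v with v ∈ W, f v := by
  induction m with
  | zero =>
    intro W hW hm
    rw [hg W ⟨hW, hm⟩, mul_zero, ← hg W ⟨hW, hm⟩]
    symm
    apply Finset.sum_subset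
    · intro w
      simp only [Finset.mem_filter, Finset.mem_univ, true_and]
      exact ts_le_perp Q W hW w
    · intro w hw hw'
      simp only [Finset.mem_filter, Finset.mem_univ, true_and] at hw'
      by_contra h
      exact hw' (gen_perp hF Q n hQw.1 W hW hm w (hf w h) ((mem_perpF Q W w).1 hw))
  | succ m ih =>
    intro W hW hm
    set G := ∑ v with v ∈ W, f v with hG
    set E := ∑ v ∈ sigF Q W, f v with hE
    set k := finrank F W with hk
    have hFG : ∑ v ∈ perpF Q W, f v = G + E := by
      rw [← Finset.sum_filter_add_sum_filter_not (perpF Q W) (fun v => v ∈ W)]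
      congr 1
      · apply Finset.sum_congr _ fun _ _ => rfl
        ext w
        simp only [Finset.mem_filter, Finset.mem_univ, true_and]
        exact ⟨fun h => h.2, fun h => ⟨ts_le_perp Q W hW w h, h⟩⟩
      · symm
        apply Finset.sum_subset
        · intro w
          simp only [Finset.mem_filter, mem_sigF]
          tauto
        · intro w
          simp only [Finset.mem_filter, mem_sigF]
          intro h1 h2
          by_contra h
          exact h2 ⟨h1.1, hf w h, h1.2⟩
    have hA : ∀ v ∈ sigF Q W, ∑ y with y ∈ W ⊔ Submodule.span F {v}, f y
        = G + ∑ y, if y + v ∈ W then f y else 0 := by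
      intro v hv
      rw [mem_sigF] at hv
      rw [hG, Finset.sum_filter, Finset.sum_filter, ← Finset.sum_add_distrib]
      refine Finset.sum_congr rfl fun y _ => ?_
      simp only [ts_sup hF]
      by_cases h1 : y ∈ W
      · have : y + v ∉ W := fun h => hv.2.2 ((Submodule.add_mem_iff_right W h1).1 h)
        simp [h1, this]
      · simp [h1]
    have hB : ∀ v ∈ sigF Q W, ∑ y ∈ perpF Q (W ⊔ Submodule.span F {v}), f y
        = ∑ y ∈ perpF Q W, if QuadraticMap.polar Q v y = 0 then f y else 0 := by
      intro v hv
      rw [← Finset.sum_filter]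
      refine Finset.sum_congr ?_ fun _ _ => rfl
      ext y
      rw [perp_sup hF, Finset.mem_filter]
    have hC : ∀ v ∈ sigF Q W, ∑ y ∈ perpF Q (W ⊔ Submodule.span F {v}), f y
        = - 2 ^ (m + 1) * ∑ y with y ∈ W ⊔ Submodule.span F {v}, f y := by
      intro v hv
      rw [mem_sigF] at hv
      apply ih _ (ts_sup_ts hF Q W hW v hv.2.1 ((mem_perpF Q W v).1 hv.1))
      rw [finrank_sup' W v hv.2.2]; omega
    have hD : ∑ v ∈ sigF Q W, (∑ y ∈ perpF Q W, if QuadraticMap.polar Q v y = 0 then f y else 0)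
        = - 2 ^ (m + 1) * ∑ v ∈ sigF Q W, (G + ∑ y, if y + v ∈ W then f y else 0) := by
      rw [Finset.mul_sum]
      refine Finset.sum_congr rfl fun v hv => ?_
      rw [← hB v hv, hC v hv, hA v hv]
    have hR : ∑ v ∈ sigF Q W, (G + ∑ y, if y + v ∈ W then f y else 0)
        = (sigF Q W).card * G + 2 ^ k * E := by
      rw [Finset.sum_add_distrib, Finset.sum_const, nsmul_eq_mul, Finset.sum_comm]
      congr 1
      rw [hE, Finset.mul_sum]
      symm
      have : ∀ y, (∑ v ∈ sigF Q W, if y + v ∈ W then f y else 0)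
          = ((sigF Q W).filter (fun v => y + v ∈ W)).card * f y := by
        intro y
        rw [← Finset.sum_filter, Finset.sum_const, nsmul_eq_mul]
      simp_rw [this]
      rw [← Finset.sum_subset (Finset.subset_univ (sigF Q W))]
      · refine Finset.sum_congr rfl fun y hy => ?_
        rw [coset_card hF Q W hW y hy]; push_cast; rfl
      · intro y _ hy
        by_cases h0 : f y = 0
        · simp [h0]
        · have : (sigF Q W).filter (fun v => y + v ∈ W) = ∅ := by
            rw [Finset.filter_eq_empty_iff]
            intro v hv h
            apply hy
            have hvv := hv
            rw [mem_sigF] at hv ⊢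
            have e : y = (y + v) + v := by rw [add_assoc, v2_add_self hF, add_zero]
            refine ⟨?_, hf y h0, ?_⟩
            · rw [mem_perpF]
              intro u hu
              rw [e, QuadraticMap.polar_add_right, ts_polar Q W hW u _ hu h,
                (mem_perpF Q W v).1 hv.1 u hu, add_zero]
            · intro hy'
              exact hv.2.2 ((Submodule.add_mem_iff_right W hy').1 h)
          simp [this]
    have hL : ∑ v ∈ sigF Q W, (∑ y ∈ perpF Q W, if QuadraticMap.polar Q v y = 0 then f y else 0)
        = (sigF Q W).card * G
          + (2 ^ k * 2 ^ (2 * m + 2) - 2 ^ k * 2 ^ (m + 1) - 2 ^ k) * E := by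
      rw [Finset.sum_comm]
      have : ∀ y, (∑ v ∈ sigF Q W, if QuadraticMap.polar Q v y = 0 then f y else 0)
          = ((sigF Q W).filter (fun v => QuadraticMap.polar Q v y = 0)).card * f y := by
        intro y
        rw [← Finset.sum_filter, Finset.sum_const, nsmul_eq_mul]
      simp_rw [this]
      rw [← Finset.sum_filter_add_sum_filter_not (perpF Q W) (fun v => v ∈ W)]
      congr 1
      · rw [hG, Finset.mul_sum]
        refine Finset.sum_congr ?_ ?_
        · ext w
          simp only [Finset.mem_filter, Finset.mem_univ, true_and]
          exact ⟨fun h => h.2, fun h => ⟨ts_le_perp Q W hW w h, h⟩⟩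
        · intro w hw
          simp only [Finset.mem_filter, Finset.mem_univ, true_and] at hw
          rw [Finset.filter_true_of_mem]
          intro v hv
          rw [mem_sigF] at hv
          rw [QuadraticMap.polar_comm]
          exact (mem_perpF Q W v).1 hv.1 w hw
      · rw [hE, Finset.mul_sum]
        symm
        rw [Finset.sum_congr rfl (fun y hy => by
          rw [← sig_card' hF n hV Q hQnd hQw W hW m hm y hy])]
        apply Finset.sum_subset
        · intro w
          simp only [Finset.mem_filter, mem_sigF]
          tauto
        · intro w
          simp only [Finset.mem_filter, mem_sigF]
          intro h1 h2
          have : f w = 0 := by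
            by_contra h
            exact h2 ⟨h1.1, hf w h, h1.2⟩
          rw [this, mul_zero]
    rw [hL, hR, sig_card hF n hV Q hQnd hQw W hW (m + 1) hm] at hD
    rw [hFG]
    have hk0 : (2 : ℤ) ^ k ≠ 0 := by positivity
    rw [← hk] at hD
    have hM : (2:ℤ) ≤ 2 ^ (m + 1) := by
      rw [pow_succ]; nlinarith [one_le_pow₀ (M₀ := ℤ) (n := m) (by norm_num : (1:ℤ) ≤ 2)]
    have e1 : (2:ℤ) ^ (2 * m + 2) = 2 ^ (m + 1) * 2 ^ (m + 1) := by ring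
    have e2 : (2:ℤ) ^ (2 * (m + 1) + 1) = 2 * (2 ^ (m + 1) * 2 ^ (m + 1)) := by ring
    have e3 : (2:ℤ) ^ (m + 1 + 1) = 2 * 2 ^ (m + 1) := by ring
    rw [e1, e2] at hD
    rw [e3]
    generalize (2:ℤ) ^ (m + 1) = M at *
    have hne : (2:ℤ) ^ k * ((M - 1) * (M + 1)) ≠ 0 := by
      refine mul_ne_zero hk0 (mul_ne_zero ?_ ?_) <;> omega
    apply mul_left_cancel₀ hne
    linear_combination hD

lemma rad_zero [Fintype F] (hF : Fintype.card F = 2) [Fintype V]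
    (n : ℕ) (hV : finrank F V = 2 * n + 2)
    (Q : QuadraticForm F V) (hQnd : Nondeg Q) (hQw : HasWittIndex Q n)
    (z : V) (hz : ∀ w, QuadraticMap.polar Q z w = 0) : z = 0 := by
  by_contra h
  have hq : Q z ≠ 0 := fun h' => h (hQnd z h' hz)
  have h1 := gauss_shift hF Q z
  simp only [hz, chi_zero, mul_one, chi_ne hq] at h1
  rw [gauss_val hF n hV Q hQnd hQw] at h1
  have : (0:ℤ) < 2 ^ (n + 1) := by positivity
  linarith

open scoped Classical in
lemma exists_z [Fintype F] (hF : Fintype.card F = 2) [Fintype V]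
    (n : ℕ) (hV : finrank F V = 2 * n + 2)
    (Q : QuadraticForm F V) (hQnd : Nondeg Q) (hQw : HasWittIndex Q n)
    (H : Submodule F V) (hH : finrank F H = 2 * n + 1) (hHnd : NondegOn Q H) :
    ∃ z, Q z = 1 ∧ ∀ v, v ∈ H ↔ QuadraticMap.polar Q z v = 0 := by
  have hr := rad_zero hF n hV Q hQnd hQw
  have h1 := perp_card hF Q H (fun u _ h => hr u h)
  rw [Module.card_eq_pow_finrank (K := F) (V := H), Module.card_eq_pow_finrank (K := F) (V := V),
    hF, hV, hH] at h1
  have h2 : (perpF Q H).card = 2 := by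
    have : (2 : ℤ) ^ (2 * n + 1) ≠ 0 := by positivity
    have h3 : ((perpF Q H).card : ℤ) = 2 := by
      apply mul_right_cancel₀ this
      push_cast at h1
      rw [h1]; ring
    exact_mod_cast h3
  obtain ⟨z, hz, hz0⟩ := Finset.exists_mem_ne (by omega : 1 < (perpF Q H).card) (0 : V)
  rw [mem_perpF] at hz
  have hker : H = LinearMap.ker (QuadraticMap.polarBilin Q z) := by
    apply Submodule.eq_of_le_of_finrank_le
    · intro v hv
      rw [LinearMap.mem_ker]
      have := hz v hv
      rw [QuadraticMap.polar_comm] at this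
      exact this
    · have hlt : finrank F (LinearMap.ker (QuadraticMap.polarBilin Q z)) < finrank F V := by
        apply Submodule.finrank_lt
        intro htop
        apply hz0
        apply hr
        intro w
        have : w ∈ LinearMap.ker (QuadraticMap.polarBilin Q z) := by rw [htop]; trivial
        exact this
      omega
  have hmem : ∀ v, v ∈ H ↔ QuadraticMap.polar Q z v = 0 := by
    intro v
    rw [hker, LinearMap.mem_ker]; rfl
  refine ⟨z, ?_, hmem⟩
  have hzH : z ∈ H := (hmem z).2 (polar_self2 hF Q z)
  rcases f2_cases hF (Q z) with h | h
  · exact absurd (hHnd z hzH h (fun w hw => (hmem w).1 hw)) hz0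
  · exact h

open scoped Classical in
/-- affine singular vectors -/
def affF [Fintype V] (Q : QuadraticForm F V) (z : V) : Finset V :=
  Finset.univ.filter (fun w => Q w = 0 ∧ QuadraticMap.polar Q z w ≠ 0)

lemma mem_affF [Fintype V] (Q : QuadraticForm F V) (z w : V) :
    w ∈ affF Q z ↔ Q w = 0 ∧ QuadraticMap.polar Q z w ≠ 0 := by
  simp [affF]

lemma f2_ne [Fintype F] (hF : Fintype.card F = 2) (a : F) : a ≠ 0 ↔ a = 1 := by
  rcases f2_cases hF a with rfl | rfl <;> simp

lemma aff_add [Fintype F] (hF : Fintype.card F = 2) [Fintype V] (Q : QuadraticForm F V) (z w : V)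
    (hz : Q z = 1) (hw : w ∈ affF Q z) : w + z ∈ affF Q z := by
  rw [mem_affF] at *
  rw [Q_add, QuadraticMap.polar_add_right, polar_self2 hF, QuadraticMap.polar_comm (⇑Q) w z, hz,
    hw.1, (f2_ne hF _).1 hw.2, zero_add, f2_add_self hF]
  simp

lemma aff_sum [Fintype F] (hF : Fintype.card F = 2) [Fintype V]
    (n : ℕ) (hV : finrank F V = 2 * n + 2)
    (Q : QuadraticForm F V) (hQnd : Nondeg Q) (hQw : HasWittIndex Q n) (z : V) (hz : Q z = 1)
    (u : V) (hu : QuadraticMap.polar Q z u = 0) :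
    4 * ∑ w ∈ affF Q z, chi (QuadraticMap.polar Q u w)
      = ∑ w, chi (QuadraticMap.polar Q u w) - ∑ w, chi (QuadraticMap.polar Q (u + z) w)
        - 2 ^ (n + 2) * chi (Q u) := by
  classical
  have h1 := gauss_shift hF Q u
  have h2 := gauss_shift hF Q (u + z)
  rw [gauss_val hF n hV Q hQnd hQw] at h1 h2
  rw [Q_add, QuadraticMap.polar_comm, hu, add_zero, hz, chi_add hF,
    chi_ne (one_ne_zero : (1:F) ≠ 0)] at h2
  have h3 : 4 * ∑ w ∈ affF Q z, chi (QuadraticMap.polar Q u w)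
     = ∑ w, (chi (QuadraticMap.polar Q u w) - chi (QuadraticMap.polar Q (u + z) w)
        + chi (Q w) * chi (QuadraticMap.polar Q u w)
        - chi (Q w) * chi (QuadraticMap.polar Q (u + z) w)) := by
    rw [affF, Finset.sum_filter, Finset.mul_sum]
    refine Finset.sum_congr rfl fun w _ => ?_
    rw [QuadraticMap.polar_add_left, chi_add hF]
    by_cases h : Q w = 0 <;> by_cases h' : QuadraticMap.polar Q z w = 0 <;>
      simp [h, h', chi_zero, chi_ne] <;> ring
  rw [h3, Finset.sum_sub_distrib, Finset.sum_add_distrib, Finset.sum_sub_distrib, h1, h2]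
  ring

lemma aff_card [Fintype F] (hF : Fintype.card F = 2) [Fintype V]
    (n : ℕ) (hV : finrank F V = 2 * n + 2)
    (Q : QuadraticForm F V) (hQnd : Nondeg Q) (hQw : HasWittIndex Q n) (z : V) (hz : Q z = 1) :
    ((affF Q z).card : ℤ) = 2 ^ (2 * n) - 2 ^ n := by
  classical
  have h := aff_sum hF n hV Q hQnd hQw z hz 0 (by simp)
  have hz0 : ¬ ∀ w, QuadraticMap.polar Q z w = 0 := by
    intro h
    have := rad_zero hF n hV Q hQnd hQw z h
    rw [this] at hz; simp at hz
  rw [all_charsum hF, all_charsum hF, zero_add, if_neg hz0] at h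
  simp only [QuadraticMap.polar_zero_left, chi_zero, map_zero] at h
  rw [Module.card_eq_pow_finrank (K := F) (V := V), hF, hV] at h
  simp at h
  have e1 : (2:ℤ) ^ (2 * n + 2) = 4 * 2 ^ (2 * n) := by ring
  have e2 : (2:ℤ) ^ (n + 2) = 4 * 2 ^ n := by ring
  rw [e1, e2] at h
  linarith

lemma aff_sum' [Fintype F] (hF : Fintype.card F = 2) [Fintype V]
    (n : ℕ) (hV : finrank F V = 2 * n + 2)
    (Q : QuadraticForm F V) (hQnd : Nondeg Q) (hQw : HasWittIndex Q n) (z : V) (hz : Q z = 1)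
    (u : V) (hu : QuadraticMap.polar Q z u = 0) (hu0 : u ≠ 0) (huz : u + z ≠ 0) :
    ∑ w ∈ affF Q z, chi (QuadraticMap.polar Q u w) = - 2 ^ n * chi (Q u) := by
  classical
  have h := aff_sum hF n hV Q hQnd hQw z hz u hu
  have hr := rad_zero hF n hV Q hQnd hQw
  rw [all_charsum hF, all_charsum hF, if_neg (fun h => hu0 (hr _ h)),
    if_neg (fun h => huz (hr _ h))] at h
  have e2 : (2:ℤ) ^ (n + 2) = 4 * 2 ^ n := by ring
  rw [e2] at h
  linarith

open scoped Classical in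
/-- the signed function -/
def sgnF [Fintype V] (Q : QuadraticForm F V) (z : V) (T : Finset V) (v : V) : ℤ :=
  if v ∈ affF Q z then (if v ∈ T then 1 else -1) else 0

lemma perp_span [Fintype V] (Q : QuadraticForm F V) (x w : V) :
    w ∈ perpF Q (Submodule.span F {x}) ↔ QuadraticMap.polar Q x w = 0 := by
  rw [mem_perpF]
  constructor
  · exact fun h => h x (Submodule.mem_span_singleton_self x)
  · intro h u hu
    obtain ⟨a, rfl⟩ := Submodule.mem_span_singleton.1 hu
    simp [h]

lemma mem_span2 [Fintype F] (hF : Fintype.card F = 2) (x y : V) :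
    y ∈ Submodule.span F {x} ↔ y = 0 ∨ y = x := by
  rw [Submodule.mem_span_singleton]
  constructor
  · rintro ⟨a, rfl⟩
    rcases f2_cases hF a with rfl | rfl <;> simp
  · rintro (rfl | rfl)
    · exact ⟨0, by simp⟩
    · exact ⟨1, by simp⟩

section vec
open scoped Classical

lemma eig_vec [Fintype F] (hF : Fintype.card F = 2) [Fintype V]
    (n : ℕ) (hn : 3 ≤ n) (hV : finrank F V = 2 * n + 2)
    (Q : QuadraticForm F V) (hQnd : Nondeg Q) (hQw : HasWittIndex Q n) (z : V)
    (T : Finset V)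
    (hg : ∀ g, IsGenerator Q n g → ∑ v with v ∈ g, sgnF Q z T v = 0)
    (x : V) (hx : x ∈ affF Q z) :
    ∑ w with QuadraticMap.polar Q x w = 0, sgnF Q z T w = - 2 ^ n * sgnF Q z T x := by
  have hx' := (mem_affF Q z x).1 hx
  have hx0 : x ≠ 0 := by rintro rfl; simp at hx'
  have hts : TotallySingular Q (Submodule.span F {x}) := by
    intro v hv
    rcases (mem_span2 hF x v).1 hv with rfl | rfl
    · simp
    · exact hx'.1
  have := eig hF n hV Q hQnd hQw (sgnF Q z T) (by
    intro v hv
    by_contra h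
    apply hv
    rw [sgnF, if_neg]
    rw [mem_affF]; tauto) hg (n - 1) (Submodule.span F {x}) hts (by
      rw [finrank_span_singleton hx0]; omega)
  have e : (Finset.univ.filter fun w => QuadraticMap.polar Q x w = 0)
      = perpF Q (Submodule.span F {x}) := by
    ext w; rw [perp_span]; simp
  rw [e, this]
  have h0 : sgnF Q z T 0 = 0 := by
    rw [sgnF, if_neg]; rw [mem_affF]; simp
  have e2 : (Finset.univ.filter fun w => w ∈ Submodule.span F {x}) = {0, x} := by
    ext w; simp [mem_span2 hF]
  rw [e2, Finset.sum_pair hx0.symm, h0, zero_add, show n - 1 + 1 = n by omega]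

variable [Fintype F] (hF : Fintype.card F = 2) [Fintype V]
    (n : ℕ) (hn : 3 ≤ n) (hV : finrank F V = 2 * n + 2)
    (Q : QuadraticForm F V) (hQnd : Nondeg Q) (hQw : HasWittIndex Q n) (z : V) (hz : Q z = 1)
    (T : Finset V) (hT : T ⊆ affF Q z)
    (hg : ∀ g, IsGenerator Q n g → ∑ v with v ∈ g, sgnF Q z T v = 0)
    (hsum : ∑ v, sgnF Q z T v = 0)

include hF hn hV hQnd hQw hz hg hsum in
lemma antisym (x : V) (hx : x ∈ affF Q z) : sgnF Q z T (x + z) = - sgnF Q z T x := by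
  have h1 := eig_vec hF n hn hV Q hQnd hQw z T hg x hx
  have h2 := eig_vec hF n hn hV Q hQnd hQw z T hg _ (aff_add hF Q z x hz hx)
  have h3 : ∑ w with QuadraticMap.polar Q x w = 0, sgnF Q z T w
      + ∑ w with QuadraticMap.polar Q (x + z) w = 0, sgnF Q z T w = ∑ v, sgnF Q z T v := by
    rw [Finset.sum_filter, Finset.sum_filter, ← Finset.sum_add_distrib]
    refine Finset.sum_congr rfl fun w _ => ?_
    by_cases hw : w ∈ affF Q z
    · have hw' := (f2_ne hF _).1 ((mem_affF Q z w).1 hw).2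
      rw [QuadraticMap.polar_add_left, hw']
      rcases f2_cases hF (QuadraticMap.polar Q x w) with h | h <;>
        simp [h, f2_add_self hF]
    · simp [sgnF, hw]
  rw [h1, h2, hsum] at h3
  have : (2:ℤ) ^ n ≠ 0 := by positivity
  have h4 : (2:ℤ) ^ n * sgnF Q z T (x + z) = 2 ^ n * - sgnF Q z T x := by linarith
  exact mul_left_cancel₀ this h4

include hF hn hV hQnd hQw hz hT hg hsum in
lemma half_sum (g : V → ℤ) :
    ∑ w ∈ affF Q z, g w = ∑ w ∈ T, (g w + g (w + z)) := by
  have hanti := antisym hF n hn hV Q hQnd hQw z hz T hg hsum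
  have zz := v2_add_self hF z
  rw [← Finset.sum_sdiff hT, add_comm, Finset.sum_add_distrib]
  congr 1
  have key : ∀ x ∈ affF Q z, (x + z ∈ T ↔ x ∉ T) := by
    intro x hx
    have h := hanti x hx
    have hx2 := aff_add hF Q z x hz hx
    simp only [sgnF, hx, hx2, if_true] at h
    by_cases h1 : x ∈ T <;> by_cases h2 : x + z ∈ T <;> simp [h1, h2] at h ⊢
  refine Finset.sum_nbij' (fun w => w + z) (fun w => w + z) ?_ ?_ ?_ ?_ ?_
  · intro a ha
    rw [Finset.mem_sdiff] at ha
    exact (key a ha.1).2 ha.2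
  · intro a ha
    rw [Finset.mem_sdiff]
    refine ⟨aff_add hF Q z a hz (hT ha), fun h => ?_⟩
    exact (key a (hT ha)).1 h ha
  · intro a _; simp [add_assoc, zz]
  · intro a _; simp [add_assoc, zz]
  · intro a _; simp [add_assoc, zz]

include hF hn hV hQnd hQw hz hT hg hsum in
lemma T_card : 2 * (T.card : ℤ) = 2 ^ (2 * n) - 2 ^ n := by
  have h := half_sum hF n hn hV Q hQnd hQw z hz T hT hg hsum (fun _ => 1)
  rw [← aff_card hF n hV Q hQnd hQw z hz]
  simp at h
  linarith

include hF hn hV hQnd hQw hz hT hg hsum in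
lemma T_sum (x : V) (hx : x ∈ T) : ∑ w ∈ T, chi (QuadraticMap.polar Q x w) = - 2 ^ n := by
  have hxa := hT hx
  have h1 := eig_vec hF n hn hV Q hQnd hQw z T hg x hxa
  have hsx : sgnF Q z T x = 1 := by simp [sgnF, hxa, hx]
  have h2 := half_sum hF n hn hV Q hQnd hQw z hz T hT hg hsum
    (fun w => sgnF Q z T w * chi (QuadraticMap.polar Q x w))
  have h3 : ∑ w ∈ T, (sgnF Q z T w * chi (QuadraticMap.polar Q x w)
      + sgnF Q z T (w + z) * chi (QuadraticMap.polar Q x (w + z)))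
      = ∑ w ∈ T, 2 * chi (QuadraticMap.polar Q x w) := by
    refine Finset.sum_congr rfl fun w hw => ?_
    have hwa := hT hw
    have hxz := ((mem_affF Q z x).1 hxa).2
    rw [QuadraticMap.polar_comm] at hxz
    rw [antisym hF n hn hV Q hQnd hQw z hz T hg hsum w hwa, QuadraticMap.polar_add_right,
      chi_add hF, chi_ne hxz]
    simp only [sgnF, hwa, hw, if_true]
    ring
  have h4 : ∑ w ∈ affF Q z, sgnF Q z T w * chi (QuadraticMap.polar Q x w)
      = 2 * ∑ w with QuadraticMap.polar Q x w = 0, sgnF Q z T w - ∑ w, sgnF Q z T w := by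
    rw [Finset.sum_filter, Finset.mul_sum, ← Finset.sum_sub_distrib]
    rw [Finset.sum_subset (Finset.subset_univ (affF Q z))
      (fun w _ hw => by simp [sgnF, hw])]
    refine Finset.sum_congr rfl fun w _ => ?_
    by_cases h : QuadraticMap.polar Q x w = 0 <;> simp [h, chi] ; ring
  rw [h3, h4, h1, hsum, hsx, ← Finset.mul_sum] at h2
  linarith

include hF hn hV hQnd hQw hz hT hg hsum in
lemma T_sum2 (x y : V) (hx : x ∈ T) (hy : y ∈ T) (hxy : x ≠ y) :
    2 * ∑ w ∈ T, chi (QuadraticMap.polar Q x w) * chi (QuadraticMap.polar Q y w)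
      = - 2 ^ n * chi (QuadraticMap.polar Q x y) := by
  have hxa := (mem_affF Q z x).1 (hT hx)
  have hya := (mem_affF Q z y).1 (hT hy)
  have hu : QuadraticMap.polar Q z (x + y) = 0 := by
    rw [QuadraticMap.polar_add_right, (f2_ne hF _).1 hxa.2, (f2_ne hF _).1 hya.2, f2_add_self hF]
  have hq : Q (x + y) = QuadraticMap.polar Q x y := by
    rw [Q_add, hxa.1, hya.1]; simp
  have hu0 : x + y ≠ 0 := by
    intro h
    apply hxy
    have : x = (x + y) + y := by rw [add_assoc, v2_add_self hF, add_zero]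
    rw [this, h, zero_add]
  have huz : x + y + z ≠ 0 := by
    intro h
    have e : y = x + z := by
      have : y = (x + y + z) + (x + z) := by
        have h1 := v2_add_self hF x
        have h2 := v2_add_self hF z
        calc y = y + (x + x) + (z + z) := by rw [h1, h2]; simp
          _ = _ := by abel
      rw [this, h, zero_add]
    have ha := antisym hF n hn hV Q hQnd hQw z hz T hg hsum x (hT hx)
    rw [← e] at ha
    simp [sgnF, hT hx, hT hy, hx, hy] at ha
  have h := aff_sum' hF n hV Q hQnd hQw z hz (x + y) hu hu0 huz
  rw [half_sum hF n hn hV Q hQnd hQw z hz T hT hg hsum, hq] at h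
  rw [← h, Finset.mul_sum]
  refine Finset.sum_congr rfl fun w _ => ?_
  rw [QuadraticMap.polar_add_right, QuadraticMap.polar_comm (⇑Q) (x + y) z, hu, add_zero,
    QuadraticMap.polar_add_left, chi_add hF]
  ring

include hF hn hV hQnd hQw hz hT hg hsum in
lemma T_deg (x : V) (hx : x ∈ T) :
    4 * ((T.filter (fun w => x ≠ w ∧ QuadraticMap.polar Q x w = 0)).card : ℤ)
      = 2 ^ (2 * n) - 3 * 2 ^ n - 4 := by
  have h1 := T_card hF n hn hV Q hQnd hQw z hz T hT hg hsum
  have h2 := T_sum hF n hn hV Q hQnd hQw z hz T hT hg hsum x hx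
  have h3 : 2 * ((T.filter (fun w => x ≠ w ∧ QuadraticMap.polar Q x w = 0)).card : ℤ)
      = ∑ w ∈ T, (1 + chi (QuadraticMap.polar Q x w) - if x = w then 2 else 0) := by
    rw [Finset.card_filter]
    push_cast
    rw [Finset.mul_sum]
    refine Finset.sum_congr rfl fun w _ => ?_
    by_cases h : x = w
    · subst h; simp [polar_self2 hF, chi_zero]
    · by_cases h' : QuadraticMap.polar Q x w = 0 <;> simp [h, h', chi]
  rw [Finset.sum_sub_distrib, Finset.sum_add_distrib, h2, Finset.sum_ite_eq, if_pos hx] at h3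
  simp at h3
  linarith

include hF hn hV hQnd hQw hz hT hg hsum in
lemma T_com (x y : V) (hx : x ∈ T) (hy : y ∈ T) (hxy : x ≠ y) :
    8 * ((T.filter (fun w => (x ≠ w ∧ QuadraticMap.polar Q x w = 0) ∧
        (y ≠ w ∧ QuadraticMap.polar Q y w = 0))).card : ℤ)
      = 2 ^ (2 * n) - 2 ^ n - 4 * 2 ^ n - 2 ^ n * chi (QuadraticMap.polar Q x y)
        - 8 * (1 + chi (QuadraticMap.polar Q x y)) := by
  have h1 := T_card hF n hn hV Q hQnd hQw z hz T hT hg hsum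
  have h2 := T_sum hF n hn hV Q hQnd hQw z hz T hT hg hsum x hx
  have h2' := T_sum hF n hn hV Q hQnd hQw z hz T hT hg hsum y hy
  have h4 := T_sum2 hF n hn hV Q hQnd hQw z hz T hT hg hsum x y hx hy hxy
  have h3 : 4 * ((T.filter (fun w => (x ≠ w ∧ QuadraticMap.polar Q x w = 0) ∧
        (y ≠ w ∧ QuadraticMap.polar Q y w = 0))).card : ℤ)
      = ∑ w ∈ T, (1 + chi (QuadraticMap.polar Q x w) + chi (QuadraticMap.polar Q y w)
        + chi (QuadraticMap.polar Q x w) * chi (QuadraticMap.polar Q y w)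
        - (if x = w then 2 * (1 + chi (QuadraticMap.polar Q x y)) else 0)
        - (if y = w then 2 * (1 + chi (QuadraticMap.polar Q x y)) else 0)) := by
    rw [Finset.card_filter]
    push_cast
    rw [Finset.mul_sum]
    refine Finset.sum_congr rfl fun w _ => ?_
    by_cases h : x = w
    · subst h
      simp [polar_self2 hF, chi_zero, QuadraticMap.polar_comm (⇑Q) y x, hxy.symm]
      ring
    · by_cases h'' : y = w
      · subst h''
        simp [polar_self2 hF, chi_zero, hxy]
        ring
      · by_cases h' : QuadraticMap.polar Q x w = 0 <;>
          by_cases h3 : QuadraticMap.polar Q y w = 0 <;> simp [h, h', h'', h3, chi]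
  rw [Finset.sum_sub_distrib, Finset.sum_sub_distrib, Finset.sum_add_distrib,
    Finset.sum_add_distrib, Finset.sum_add_distrib, h2, h2', Finset.sum_ite_eq,
    Finset.sum_ite_eq, if_pos hx, if_pos hy] at h3
  simp at h3
  linarith

end vec

lemma span_inj2 [Fintype F] (hF : Fintype.card F = 2) (v w : V) (hw : w ≠ 0)
    (h : Submodule.span F {v} = Submodule.span F {w}) : v = w := by
  have h1 : w ∈ Submodule.span F {v} := by rw [h]; exact Submodule.mem_span_singleton_self w
  rcases (mem_span2 hF v w).1 h1 with h2 | h2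
  · exact absurd h2 hw
  · exact h2.symm

open scoped Classical in
lemma ncard_pts [Fintype F] (hF : Fintype.card F = 2) [Fintype V] (S : Set (Submodule F V))
    (hS : ∀ P ∈ S, ∃ v, v ≠ 0 ∧ P = Submodule.span F {v})
    (s : Finset V) (hs : ∀ v, v ∈ s ↔ Submodule.span F {v} ∈ S) :
    S.ncard = s.card := by
  have hs' : s = (Finset.univ.filter (fun v : V => Submodule.span F {v} ∈ S)) := by
    ext v; simp [hs]
  rw [hs']
  rw [← Set.ncard_coe_finset, ← Set.ncard_image_of_injOn (f := fun v : V => Submodule.span F {v})]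
  · congr 1
    ext P
    simp only [Set.mem_image, Finset.coe_filter, Finset.mem_univ, true_and, Set.mem_ofPred_eq]
    constructor
    · intro hP
      obtain ⟨v, _, rfl⟩ := hS P hP
      exact ⟨v, hP, rfl⟩
    · rintro ⟨v, hv, rfl⟩
      exact hv
  · intro v _ w hw h
    simp only [Finset.coe_filter, Finset.mem_univ, true_and, Set.mem_ofPred_eq] at hw
    obtain ⟨u, hu, hu'⟩ := hS _ hw
    have : w = u := span_inj2 hF w u hu hu'
    subst this
    exact span_inj2 hF v w hu h

open scoped Classical in
lemma sgn_sum [Fintype V] (Q : QuadraticForm F V) (z : V) (T : Finset V)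
    (hT : T ⊆ affF Q z) (s : Finset V) :
    ∑ v ∈ s, sgnF Q z T v
      = ((T.filter (fun v => v ∈ s)).card : ℤ) - ((affF Q z \ T).filter (fun v => v ∈ s)).card := by
  have e1 : T.filter (fun v => v ∈ s) = s.filter (fun v => v ∈ T) := by
    ext; simp [and_comm]
  have e2 : (affF Q z \ T).filter (fun v => v ∈ s)
      = s.filter (fun v => v ∈ affF Q z ∧ v ∉ T) := by
    ext; simp; tauto
  rw [e1, e2, Finset.card_filter, Finset.card_filter]
  push_cast
  rw [← Finset.sum_sub_distrib]
  refine Finset.sum_congr rfl fun v _ => ?_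
  by_cases h : v ∈ T
  · simp [sgnF, h, hT h]
  · by_cases h' : v ∈ affF Q z <;> simp [sgnF, h, h']

lemma adj_iff [Fintype F] (hF : Fintype.card F = 2) (Q : QuadraticForm F V) (x y : V)
    (hy : y ≠ 0) (hqx : Q x = 0) (hqy : Q y = 0) :
    AdjOn Q (Submodule.span F {x}) (Submodule.span F {y}) ↔
      x ≠ y ∧ QuadraticMap.polar Q x y = 0 := by
  constructor
  · rintro ⟨h1, h2⟩
    refine ⟨fun h => h1 (by rw [h]), ?_⟩
    exact ts_polar Q _ h2 x y (Submodule.mem_sup_left (Submodule.mem_span_singleton_self x))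
      (Submodule.mem_sup_right (Submodule.mem_span_singleton_self y))
  · rintro ⟨h1, h2⟩
    refine ⟨fun h => h1 (span_inj2 hF x y hy h), ?_⟩
    apply ts_sup_ts hF Q _ _ y hqy
    · intro u hu
      obtain ⟨a, rfl⟩ := Submodule.mem_span_singleton.1 hu
      simp [h2]
    · intro v hv
      rcases (mem_span2 hF x v).1 hv with rfl | rfl
      · simp
      · exact hqx



/-- The collinearity graph `𝒢` on a relative hemisystem `R` of `Q⁻(2n+1,2)`, `n ≥ 3`,
is strongly regular with parameters `v = 2^{n−1}(2ⁿ − 1)`, `k = (2^{n−2} − 1)(2ⁿ + 1)`,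
`λ = 2(2^{n−1} + 1)(2^{n−3} − 1)` and `μ = 2^{n−1}(2^{n−2} − 1)`: it has `v` vertices,
every vertex has exactly `k` neighbours, adjacent vertices have exactly `λ` common
neighbours and non-adjacent vertices have exactly `μ` common neighbours. -/
theorem statement_16
    (n : ℕ) [Fintype F] (hF : Fintype.card F = 2) (hn : 3 ≤ n)
    (hV : finrank F V = 2 * n + 2)
    (Q : QuadraticForm F V) (hQnd : Nondeg Q) (hQw : HasWittIndex Q n)
    (H : Submodule F V) (hH : finrank F H = 2 * n + 1) (hHnd : NondegOn Q H)
    (R : Set (Submodule F V)) (hRovoid : IsRelativeMOvoid Q n H (2 ^ (n - 2)) R)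
    (hRhemi : R.ncard
      = {P : Submodule F V | IsSingularPoint Q P ∧ ¬ P ≤ H ∧ P ∉ R}.ncard) :
    -- number of vertices
    R.ncard = 2 ^ (n - 1) * (2 ^ n - 1) ∧
    -- regularity of degree k
    (∀ P ∈ R, {P' ∈ R | AdjOn Q P P'}.ncard = (2 ^ (n - 2) - 1) * (2 ^ n + 1)) ∧
    -- adjacent vertices have λ common neighbours
    (∀ P ∈ R, ∀ P'' ∈ R, AdjOn Q P P'' →
      {P' ∈ R | AdjOn Q P P' ∧ AdjOn Q P'' P'}.ncard
        = 2 * (2 ^ (n - 1) + 1) * (2 ^ (n - 3) - 1)) ∧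
    -- distinct non-adjacent vertices have μ common neighbours
    (∀ P ∈ R, ∀ P'' ∈ R, P ≠ P'' → ¬ AdjOn Q P P'' →
      {P' ∈ R | AdjOn Q P P' ∧ AdjOn Q P'' P'}.ncard
        = 2 ^ (n - 1) * (2 ^ (n - 2) - 1)) := by
  classical
  have : FiniteDimensional F V := FiniteDimensional.of_finrank_pos (by omega)
  have : Finite V := Module.finite_of_finite F
  letI : Fintype V := Fintype.ofFinite V
  obtain ⟨z, hz, hzH⟩ := exists_z hF n hV Q hQnd hQw H hH hHnd
  obtain ⟨hR1, hR2⟩ := hRovoid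
  set T : Finset V := Finset.univ.filter (fun v => Submodule.span F {v} ∈ R) with hTdef
  have memT : ∀ v, v ∈ T ↔ Submodule.span F {v} ∈ R := by simp [hTdef]
  have hsp : ∀ P ∈ R, ∃ v, v ≠ 0 ∧ P = Submodule.span F {v} := by
    intro P hP
    obtain ⟨⟨v, hv, _, h⟩, _⟩ := hR1 P hP
    exact ⟨v, hv, h⟩
  have hT : T ⊆ affF Q z := by
    intro v hv
    rw [memT] at hv
    obtain ⟨⟨w, hw, hw', h⟩, hnot⟩ := hR1 _ hv
    have : v = w := span_inj2 hF v w hw h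
    subst this
    rw [mem_affF]
    refine ⟨hw', fun h0 => hnot ?_⟩
    rw [Submodule.span_singleton_le_iff_mem]
    exact (hzH v).2 h0
  have hsum : ∑ v, sgnF Q z T v = 0 := by
    have e1 : R.ncard = T.card := ncard_pts hF R hsp T memT
    have e2 := ncard_pts hF {P : Submodule F V | IsSingularPoint Q P ∧ ¬ P ≤ H ∧ P ∉ R} (by
      rintro P ⟨⟨v, hv, _, h⟩, _⟩
      exact ⟨v, hv, h⟩) (affF Q z \ T) (by
      intro v
      rw [iff_comm]
      simp only [Finset.mem_filter, Finset.mem_univ, true_and, Set.mem_ofPred_eq,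
        Finset.mem_sdiff, memT, mem_affF, Submodule.span_singleton_le_iff_mem, hzH]
      constructor
      · rintro ⟨⟨w, hw, hw', h⟩, h2, h3⟩
        have : v = w := span_inj2 hF v w hw h
        subst this
        exact ⟨⟨hw', h2⟩, h3⟩
      · rintro ⟨⟨h1, h2⟩, h3⟩
        refine ⟨⟨v, ?_, h1, rfl⟩, h2, h3⟩
        rintro rfl
        simp at h2)
    have := sgn_sum Q z T hT Finset.univ
    simp only [Finset.mem_univ, Finset.filter_true] at this
    rw [this, ← e1, hRhemi, e2, sub_self]
  have hg : ∀ g, IsGenerator Q n g → ∑ v with v ∈ g, sgnF Q z T v = 0 := by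
    intro g hgen
    by_cases hgH : g ≤ H
    · apply Finset.sum_eq_zero
      intro v hv
      simp only [Finset.mem_filter, Finset.mem_univ, true_and] at hv
      have := (hzH v).1 (hgH hv)
      rw [sgnF, if_neg]
      rw [mem_affF]; tauto
    · have h1 := hR2 g hgen hgH
      rw [ncard_pts hF _ (fun P hP => hsp P hP.1)
        (T.filter (fun v => v ∈ Finset.univ.filter (fun v => v ∈ g)))
        (by intro v; simp [memT])] at h1
      have e2 : (affF Q z \ T).filter (fun v => v ∈ Finset.univ.filter (fun v => v ∈ g))
          = (Finset.univ.filter (fun v => v ∈ g) \ Finset.univ.filter (fun v => v ∈ H ⊓ g)) \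
            T.filter (fun v => v ∈ Finset.univ.filter (fun v => v ∈ g)) := by
        ext v
        simp only [Finset.mem_filter, Finset.mem_univ, true_and, Finset.mem_sdiff, mem_affF,
          Submodule.mem_inf, hzH]
        constructor
        · tauto
        · rintro ⟨⟨h1, h2⟩, h3⟩
          refine ⟨⟨⟨hgen.1 v h1, ?_⟩, ?_⟩, h1⟩ <;> tauto
      have hinf : finrank F (H ⊓ g : Submodule F V) = n - 1 := by
        have h := Submodule.finrank_sup_add_finrank_inf_eq H g
        have hlt : finrank F H < finrank F (H ⊔ g : Submodule F V) := by
          apply Submodule.finrank_lt_finrank_of_lt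
          rw [left_lt_sup]
          exact hgH
        have hle := Submodule.finrank_le (H ⊔ g)
        have := hgen.2
        omega
      have hs1 : Finset.univ.filter (fun v => v ∈ H ⊓ g) ⊆ Finset.univ.filter (fun v => v ∈ g) := by
        intro v
        simp only [Finset.mem_filter, Finset.mem_univ, true_and, Submodule.mem_inf]
        tauto
      have hs2 : T.filter (fun v => v ∈ Finset.univ.filter (fun v => v ∈ g)) ⊆
          Finset.univ.filter (fun v => v ∈ g) \ Finset.univ.filter (fun v => v ∈ H ⊓ g) := by
        intro v
        simp only [Finset.mem_filter, Finset.mem_univ, true_and, Submodule.mem_inf,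
          Finset.mem_sdiff, hzH]
        rintro ⟨hv, hv'⟩
        have := (mem_affF Q z v).1 (hT hv)
        tauto
      rw [sgn_sum Q z T hT, e2, Finset.cast_card_sdiff hs2, Finset.cast_card_sdiff hs1,
        mem_card hF, mem_card hF, hinf, hgen.2, h1]
      obtain ⟨m, rfl⟩ : ∃ m, n = m + 2 := ⟨n - 2, by omega⟩
      rw [show m + 2 - 2 = m by omega, show m + 2 - 1 = m + 1 by omega]
      push_cast; ring
  have hcard := T_card hF n hn hV Q hQnd hQw z hz T hT hg hsum
  have hdeg := T_deg hF n hn hV Q hQnd hQw z hz T hT hg hsum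
  have hcom := T_com hF n hn hV Q hQnd hQw z hz T hT hg hsum
  have hadj : ∀ x ∈ T, ∀ y ∈ T, AdjOn Q (Submodule.span F {x}) (Submodule.span F {y}) ↔
      x ≠ y ∧ QuadraticMap.polar Q x y = 0 := by
    intro x hx y hy
    have hxa := (mem_affF Q z x).1 (hT hx)
    have hya := (mem_affF Q z y).1 (hT hy)
    exact adj_iff hF Q x y (by rintro rfl; simp at hya) hxa.1 hya.1
  obtain ⟨m, rfl⟩ : ∃ m, n = m + 3 := ⟨n - 3, by omega⟩
  rw [show m + 3 - 1 = m + 2 by omega, show m + 3 - 2 = m + 1 by omega,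
    show m + 3 - 3 = m by omega]
  have p0 : 1 ≤ 2 ^ m := Nat.one_le_two_pow
  have p1 : 1 ≤ 2 ^ (m + 1) := Nat.one_le_two_pow
  have p3 : 1 ≤ 2 ^ (m + 3) := Nat.one_le_two_pow
  have q1 : (2:ℤ) ^ (m + 1) = 2 * 2 ^ m := by ring
  have q2 : (2:ℤ) ^ (m + 2) = 4 * 2 ^ m := by ring
  have q3 : (2:ℤ) ^ (m + 3) = 8 * 2 ^ m := by ring
  have q6 : (2:ℤ) ^ (2 * (m + 3)) = 64 * (2 ^ m * 2 ^ m) := by ring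
  simp only [q3, q6] at hcard hdeg hcom
  have hcomN : ∀ x ∈ T, ∀ y ∈ T,
      {P' ∈ R | AdjOn Q (Submodule.span F {x}) P' ∧ AdjOn Q (Submodule.span F {y}) P'}.ncard
      = (T.filter (fun w => (x ≠ w ∧ QuadraticMap.polar Q x w = 0) ∧
        (y ≠ w ∧ QuadraticMap.polar Q y w = 0))).card := by
    intro x hx y hy
    apply ncard_pts hF _ (fun P hP => hsp P hP.1)
    intro w
    rw [iff_comm]
    simp only [Finset.mem_filter, Finset.mem_univ, true_and, Set.mem_ofPred_eq, ← memT]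
    constructor
    · rintro ⟨h1, h2, h3⟩
      exact ⟨h1, (hadj x hx w h1).1 h2, (hadj y hy w h1).1 h3⟩
    · rintro ⟨h1, h2, h3⟩
      exact ⟨h1, (hadj x hx w h1).2 h2, (hadj y hy w h1).2 h3⟩
  refine ⟨?_, ?_, ?_, ?_⟩
  · rw [ncard_pts hF R hsp T memT]
    zify [p3]
    rw [q2, q3]
    change (T.card : ℤ) = _
    linarith
  · intro P hP
    obtain ⟨x, hx0, rfl⟩ := hsp P hP
    have hx := (memT x).2 hP
    have e := ncard_pts hF {P' ∈ R | AdjOn Q (Submodule.span F {x}) P'}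
        (fun P hP => hsp P hP.1)
        (T.filter (fun w => x ≠ w ∧ QuadraticMap.polar Q x w = 0)) (by
      intro w
      rw [iff_comm]
      simp only [Finset.mem_filter, Finset.mem_univ, true_and, Set.mem_ofPred_eq, ← memT]
      exact and_congr_right fun h => hadj x hx w h)
    rw [e]
    have := hdeg x hx
    zify [p1]
    rw [q1, q3]
    linarith
  · intro P hP P2 hP2 hPP
    obtain ⟨x, hx0, rfl⟩ := hsp P hP
    obtain ⟨y, hy0, rfl⟩ := hsp P2 hP2
    have hx := (memT x).2 hP
    have hy := (memT y).2 hP2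
    obtain ⟨hxy, hp⟩ := (hadj x hx y hy).1 hPP
    have := hcom x y hx hy hxy
    rw [hp, chi_zero] at this
    rw [hcomN x hx y hy]
    zify [p0]
    rw [q2]
    linarith
  · intro P hP P2 hP2 hne hPP
    obtain ⟨x, hx0, rfl⟩ := hsp P hP
    obtain ⟨y, hy0, rfl⟩ := hsp P2 hP2
    have hx := (memT x).2 hP
    have hy := (memT y).2 hP2
    have hxy : x ≠ y := fun h => hne (by rw [h])
    have hp : QuadraticMap.polar Q x y ≠ 0 := fun h => hPP ((hadj x hx y hy).2 ⟨hxy, h⟩)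
    have := hcom x y hx hy hxy
    rw [chi_ne hp] at this
    rw [hcomN x hx y hy]
    zify [p1]
    rw [q1, q2]
    linarith
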